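/- arXiv:math/0701896 — 3 statements merged into one kernel-verified Lean document; each statement's English description precedes it below -/
import Mathlib

section
/- Let f : D → ℝ⁴ be a branched disc of order N at 0. Then there exists δ ∈ (0,1) such that for every z ∈ D with 0 < |z| ≤ δ one has ⟨f(z), df_z(z)⟩ > 0, where df_z denotes the Fréchet derivative of f at z applied to the vector z ∈ ℂ ≅ ℝ²; equivalently, the directional derivative of z ↦ ‖f(z)‖² at z in the radial direction z is strictly positive. In particular, for each fixed θ the function r ↦ ‖f(r e^{iθ})‖ is strictly increasing on (0, δ]. -/
open Complex Filter Asymptotics Metric Topology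

/-- `f : ℂ → ℝ⁴` (defined on the open unit disc) is a *branched disc of order `N` at `0`*:
`f` is `C¹` on the unit disc, `f 0 = 0`, and as `z → 0`,
`f¹(z) = Re(z^N) + o(|z|^N)`, `f²(z) = Im(z^N) + o(|z|^N)`, `f³, f⁴ = o(|z|^N)`,
with the first-order derivatives of the corresponding differences being `o(|z|^{N-1})`. -/
structure IsBranchedDisc (f : ℂ → EuclideanSpace ℝ (Fin 4)) (N : ℕ) : Prop where
  two_le : 2 ≤ N
  contDiffOn : ContDiffOn ℝ 1 f (ball (0 : ℂ) 1)
  map_zero : f 0 = 0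
  comp1 : (fun z : ℂ => f z 0 - (z ^ N).re) =o[𝓝 (0 : ℂ)] fun z => ‖z‖ ^ N
  comp2 : (fun z : ℂ => f z 1 - (z ^ N).im) =o[𝓝 (0 : ℂ)] fun z => ‖z‖ ^ N
  comp3 : (fun z : ℂ => f z 2) =o[𝓝 (0 : ℂ)] fun z => ‖z‖ ^ N
  comp4 : (fun z : ℂ => f z 3) =o[𝓝 (0 : ℂ)] fun z => ‖z‖ ^ N
  deriv1 : (fun z : ℂ => fderiv ℝ (fun w : ℂ => f w 0 - (w ^ N).re) z)
      =o[𝓝 (0 : ℂ)] fun z => ‖z‖ ^ (N - 1)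
  deriv2 : (fun z : ℂ => fderiv ℝ (fun w : ℂ => f w 1 - (w ^ N).im) z)
      =o[𝓝 (0 : ℂ)] fun z => ‖z‖ ^ (N - 1)
  deriv3 : (fun z : ℂ => fderiv ℝ (fun w : ℂ => f w 2) z)
      =o[𝓝 (0 : ℂ)] fun z => ‖z‖ ^ (N - 1)
  deriv4 : (fun z : ℂ => fderiv ℝ (fun w : ℂ => f w 3) z)
      =o[𝓝 (0 : ℂ)] fun z => ‖z‖ ^ (N - 1)

lemma bd_arith (n ρ a b e1 e2 e3 e4 g1 g2 g3 g4 : ℝ) (hn : 1 ≤ n) (hρ : 0 < ρ)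
    (hab : a ^ 2 + b ^ 2 = ρ ^ 2)
    (h1 : |e1| ≤ 1 / 16 * ρ) (h2 : |e2| ≤ 1 / 16 * ρ) (h3 : |e3| ≤ 1 / 16 * ρ)
    (h4 : |e4| ≤ 1 / 16 * ρ) (k1 : |g1| ≤ 1 / 16 * ρ) (k2 : |g2| ≤ 1 / 16 * ρ)
    (k3 : |g3| ≤ 1 / 16 * ρ) (k4 : |g4| ≤ 1 / 16 * ρ) :
    0 < (a + e1) * (n * a + g1) + (b + e2) * (n * b + g2) + e3 * g3 + e4 * g4 := by
  have ha : |a| ≤ ρ := abs_le_of_sq_le_sq (by nlinarith [sq_nonneg b]) hρ.le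
  have hb : |b| ≤ ρ := abs_le_of_sq_le_sq (by nlinarith [sq_nonneg a]) hρ.le
  have key : ∀ x y c d : ℝ, |x| ≤ c * ρ → |y| ≤ d * ρ → 0 ≤ c → -(c * d * ρ ^ 2) ≤ x * y := by
    intro x y c d hx hy hc
    have h : |x * y| ≤ (c * ρ) * (d * ρ) := by
      rw [abs_mul]
      exact mul_le_mul hx hy (abs_nonneg _) (by positivity)
    have := (abs_le.1 h).1
    linarith
  have ha' : |a| ≤ 1 * ρ := by linarith
  have hb' : |b| ≤ 1 * ρ := by linarith
  have t1 := key _ _ _ _ ha' k1 (by norm_num)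
  have t2 := key _ _ _ _ hb' k2 (by norm_num)
  have t3 := key _ _ _ _ ha' h1 (by norm_num)
  have t4 := key _ _ _ _ hb' h2 (by norm_num)
  have t5 := key _ _ _ _ h1 k1 (by norm_num)
  have t6 := key _ _ _ _ h2 k2 (by norm_num)
  have t7 := key _ _ _ _ h3 k3 (by norm_num)
  have t8 := key _ _ _ _ h4 k4 (by norm_num)
  have hρ2 : 0 < ρ ^ 2 := by positivity
  have e : (a + e1) * (n * a + g1) + (b + e2) * (n * b + g2) + e3 * g3 + e4 * g4
      = n * (ρ ^ 2 + a * e1 + b * e2) + a * g1 + b * g2 + e1 * g1 + e2 * g2 + e3 * g3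
        + e4 * g4 := by
    rw [← hab]; ring
  have t9 : ρ ^ 2 / 2 ≤ ρ ^ 2 + a * e1 + b * e2 := by linarith
  have t10 : 1 * (ρ ^ 2 / 2) ≤ n * (ρ ^ 2 + a * e1 + b * e2) :=
    mul_le_mul hn t9 (by positivity) (by linarith)
  rw [e]
  linarith

lemma bd_apply {L : ℂ →L[ℝ] ℝ} {z : ℂ} {N : ℕ} (hN : 2 ≤ N)
    (h : ‖L‖ ≤ 1 / 16 * ‖‖z‖ ^ (N - 1)‖) : |L z| ≤ 1 / 16 * ‖z‖ ^ N := by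
  have h1 := L.le_opNorm z
  rw [Real.norm_eq_abs] at h1
  rw [Real.norm_of_nonneg (by positivity)] at h
  calc |L z| ≤ ‖L‖ * ‖z‖ := h1
    _ ≤ (1 / 16 * ‖z‖ ^ (N - 1)) * ‖z‖ := by gcongr
    _ = 1 / 16 * ‖z‖ ^ N := by
      rw [mul_assoc, ← pow_succ, Nat.sub_add_cancel (by omega)]

lemma bd_pow (z : ℂ) (N : ℕ) (hN : 2 ≤ N) :
    ∃ P : ℂ →L[ℝ] ℂ, HasFDerivAt (fun w : ℂ => w ^ N) P z ∧ P z = N * z ^ N := by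
  refine ⟨_, ((hasDerivAt_pow N z).hasFDerivAt).restrictScalars ℝ, ?_⟩
  obtain ⟨M, rfl⟩ : ∃ M, N = M + 1 := ⟨N - 1, by omega⟩
  simp
  ring

/-- For a branched disc `f` of order `N` at `0`, there is `δ ∈ (0,1)` such that for all
`z` with `0 < |z| ≤ δ` the radial derivative of `‖f‖²` is positive: `⟨f(z), df_z(z)⟩ > 0`.
In particular, for each `θ` the function `r ↦ ‖f (r e^{iθ})‖` is strictly increasing
on `(0, δ]`. -/
theorem branchedDisc_radial_derivative_pos
    (f : ℂ → EuclideanSpace ℝ (Fin 4)) (N : ℕ) (hf : IsBranchedDisc f N) :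
    ∃ δ : ℝ, 0 < δ ∧ δ < 1 ∧
      (∀ z : ℂ, 0 < ‖z‖ → ‖z‖ ≤ δ → 0 < inner (f z) (fderiv ℝ f z z : EuclideanSpace ℝ (Fin 4)) (𝕜 := ℝ)) ∧
      ∀ θ : ℝ, StrictMonoOn
        (fun r : ℝ => ‖f ((r : ℂ) * Complex.exp (θ * Complex.I))‖) (Set.Ioc 0 δ) := by
  have hdiff : ∀ z : ℂ, ‖z‖ < 1 → DifferentiableAt ℝ f z := fun z hz =>
    (hf.contDiffOn.differentiableOn (by norm_num)).differentiableAt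
      (isOpen_ball.mem_nhds (by simpa using hz))
  have c : (0 : ℝ) < 1 / 16 := by norm_num
  have hev := (hf.comp1.def c).and <| (hf.comp2.def c).and <| (hf.comp3.def c).and <|
    (hf.comp4.def c).and <| (hf.deriv1.def c).and <| (hf.deriv2.def c).and <|
    (hf.deriv3.def c).and (hf.deriv4.def c)
  obtain ⟨ε, hε, hball⟩ := Metric.eventually_nhds_iff.1 hev
  have hpos : ∀ z : ℂ, 0 < ‖z‖ → ‖z‖ ≤ min (ε / 2) (1 / 2) →
      0 < inner (f z) (fderiv ℝ f z z : EuclideanSpace ℝ (Fin 4)) (𝕜 := ℝ) := by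
    intro z hz hzδ
    have hz1 : ‖z‖ ≤ ε / 2 := hzδ.trans (min_le_left _ _)
    have hz2 : ‖z‖ ≤ 1 / 2 := hzδ.trans (min_le_right _ _)
    obtain ⟨h1, h2, h3, h4, k1, k2, k3, k4⟩ := hball (y := z) (by
      rw [dist_zero_right]; linarith)
    have hd := (hdiff z (by linarith)).hasFDerivAt
    obtain ⟨P, hP, hPz⟩ := bd_pow z N hf.two_le
    have hc : ∀ i : Fin 4, HasFDerivAt (fun w => f w i)
        ((EuclideanSpace.proj i : EuclideanSpace ℝ (Fin 4) →L[ℝ] ℝ).comp (fderiv ℝ f z)) z :=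
      fun i => (EuclideanSpace.proj i : EuclideanSpace ℝ (Fin 4) →L[ℝ] ℝ).hasFDerivAt.comp z hd
    have hre : HasFDerivAt (fun w : ℂ => (w ^ N).re) (Complex.reCLM.comp P) z :=
      Complex.reCLM.hasFDerivAt.comp z hP
    have him : HasFDerivAt (fun w : ℂ => (w ^ N).im) (Complex.imCLM.comp P) z :=
      Complex.imCLM.hasFDerivAt.comp z hP
    rw [((hc 0).fun_sub hre).fderiv] at k1
    rw [((hc 1).fun_sub him).fderiv] at k2
    rw [(hc 2).fderiv] at k3
    rw [(hc 3).fderiv] at k4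
    have hproj : ∀ (i : Fin 4) (x : EuclideanSpace ℝ (Fin 4)),
        (EuclideanSpace.proj i : EuclideanSpace ℝ (Fin 4) →L[ℝ] ℝ) x = x i := fun _ _ => rfl
    have k1 := bd_apply hf.two_le k1
    have k2 := bd_apply hf.two_le k2
    have k3 := bd_apply hf.two_le k3
    have k4 := bd_apply hf.two_le k4
    rw [Real.norm_eq_abs, Real.norm_of_nonneg (by positivity)] at h1 h2 h3 h4
    simp only [_root_.sub_apply, ContinuousLinearMap.comp_apply, hPz,
      Complex.reCLM_apply, Complex.imCLM_apply, hproj] at k1 k2 k3 k4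
    have e1 : ((N : ℂ) * z ^ N).re = N * (z ^ N).re := by simp
    have e2 : ((N : ℂ) * z ^ N).im = N * (z ^ N).im := by simp
    rw [e1] at k1
    rw [e2] at k2
    have hab : (z ^ N).re ^ 2 + (z ^ N).im ^ 2 = (‖z‖ ^ N) ^ 2 := by
      rw [← norm_pow, Complex.sq_norm, Complex.normSq_apply]; ring
    have hN1 : (1 : ℝ) ≤ N := by
      have := hf.two_le
      exact_mod_cast (by omega : 1 ≤ N)
    have := bd_arith N (‖z‖ ^ N) _ _ _ _ _ _ _ _ _ _ hN1 (by positivity) hab h1 h2 h3 h4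
      k1 k2 k3 k4
    rw [PiLp.inner_apply, Fin.sum_univ_four]
    simp only [RCLike.inner_apply, conj_trivial]
    refine lt_of_lt_of_eq this ?_
    ring
  have hδ : min (ε / 2) (1 / 2) ≤ (1 / 2 : ℝ) := min_le_right _ _
  refine ⟨min (ε / 2) (1 / 2), by positivity, by linarith, hpos, ?_⟩
  intro θ
  set u : ℂ := Complex.exp (θ * Complex.I) with hu
  have hun : ‖u‖ = 1 := Complex.norm_exp_ofReal_mul_I θ
  have hnorm : ∀ r : ℝ, 0 < r → ‖(r : ℂ) * u‖ = r := by
    intro r hr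
    rw [norm_mul, hun, Complex.norm_real, Real.norm_of_nonneg hr.le, mul_one]
  have hD : ∀ r ∈ Set.Ioc (0 : ℝ) (min (ε / 2) (1 / 2)),
      HasDerivAt (fun r : ℝ => ‖f ((r : ℂ) * u)‖ ^ 2)
        (2 * inner ℝ (f ((r : ℂ) * u)) (fderiv ℝ f ((r : ℂ) * u) u)) r := by
    intro r hr
    have hl : HasDerivAt (fun r : ℝ => (r : ℂ) * u) u r := by
      simpa using (Complex.ofRealCLM.hasDerivAt (x := r)).mul_const u
    have hfd := (hdiff ((r : ℂ) * u) (by rw [hnorm r hr.1]; linarith [hr.2])).hasFDerivAt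
    exact (hfd.comp_hasDerivAt r hl).norm_sq
  have hmono : StrictMonoOn (fun r : ℝ => ‖f ((r : ℂ) * u)‖ ^ 2)
      (Set.Ioc 0 (min (ε / 2) (1 / 2))) := by
    refine strictMonoOn_of_deriv_pos (convex_Ioc _ _)
      (fun r hr => (hD r hr).continuousAt.continuousWithinAt) ?_
    intro r hr
    have hr := interior_subset hr
    rw [(hD r hr).deriv]
    have h := hpos ((r : ℂ) * u) (by rw [hnorm r hr.1]; exact hr.1)
      (by rw [hnorm r hr.1]; exact hr.2)
    have e : fderiv ℝ f ((r : ℂ) * u) ((r : ℂ) * u) = r • fderiv ℝ f ((r : ℂ) * u) u := by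
      rw [← map_smul, Complex.real_smul]
    rw [e, real_inner_smul_right] at h
    have := (mul_pos_iff_of_pos_left hr.1).1 h
    linarith
  intro r hr s hs hrs
  exact lt_of_pow_lt_pow_left₀ 2 (norm_nonneg _) (hmono hr hs hrs)
end

section
/- Let f : D → ℝ⁴ be a branched disc of order N at 0. Then there exist δ ∈ (0,1) and ε₀ > 0 such that for every ε ∈ (0, ε₀) there is a function r_ε : ℝ → (0, δ], 2π-periodic and of class C¹, such that for all θ ∈ ℝ and all r ∈ (0, δ]: ‖f(r e^{iθ})‖ = ε if and only if r = r_ε(θ). Consequently, the intersection of the image f({z : 0 < |z| ≤ δ}) with the sphere S(0,ε) ⊂ ℝ⁴ of radius ε centered at 0 is exactly the closed curve θ ↦ f(r_ε(θ) e^{iθ}). -/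
open Complex Filter Asymptotics Metric Topology

lemma bd_alg (n R S a b x0 x1 x2 x3 y0 y1 y2 y3 : ℝ) (hn : 2 ≤ n) (hR : 0 < R) (hS : 0 < S)
    (hab : a ^ 2 + b ^ 2 = 1)
    (hx0 : |x0| ≤ 1 / 8 * R) (hx1 : |x1| ≤ 1 / 8 * R) (hx2 : |x2| ≤ 1 / 8 * R)
    (hx3 : |x3| ≤ 1 / 8 * R)
    (hy0 : |y0| ≤ 1 / 8 * S) (hy1 : |y1| ≤ 1 / 8 * S) (hy2 : |y2| ≤ 1 / 8 * S)
    (hy3 : |y3| ≤ 1 / 8 * S) :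
    0 < (x0 + R * a) * (y0 + n * S * a) + (x1 + R * b) * (y1 + n * S * b) + x2 * y2 + x3 * y3 := by
  have ha : |a| ≤ 1 := abs_le.mpr ⟨by nlinarith [sq_nonneg b], by nlinarith [sq_nonneg b]⟩
  have hb : |b| ≤ 1 := abs_le.mpr ⟨by nlinarith [sq_nonneg a], by nlinarith [sq_nonneg a]⟩
  have hRS : 0 < R * S := mul_pos hR hS
  have key : ∀ x y X Y : ℝ, |x| ≤ X → |y| ≤ Y → -(X * Y) ≤ x * y := by
    intro x y X Y h1 h2
    have h3 : |x * y| ≤ X * Y := by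
      rw [abs_mul]
      exact mul_le_mul h1 h2 (abs_nonneg _) ((abs_nonneg _).trans h1)
    exact (abs_le.mp h3).1
  have e0 := key _ _ _ _ hx0 hy0
  have e1 := key _ _ _ _ hx1 hy1
  have e2 := key _ _ _ _ hx2 hy2
  have e3 := key _ _ _ _ hx3 hy3
  have g0 := mul_le_mul_of_nonneg_left (key _ _ _ _ ha hy0) hR.le
  have g1 := mul_le_mul_of_nonneg_left (key _ _ _ _ hb hy1) hR.le
  have hnS : 0 ≤ n * S := by positivity
  have k0 := mul_le_mul_of_nonneg_left (key _ _ _ _ ha hx0) hnS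
  have k1 := mul_le_mul_of_nonneg_left (key _ _ _ _ hb hx1) hnS
  have e : (x0 + R * a) * (y0 + n * S * a) + (x1 + R * b) * (y1 + n * S * b) + x2 * y2 + x3 * y3
      = n * (R * S) * (a ^ 2 + b ^ 2) + x0 * y0 + x1 * y1 + x2 * y2 + x3 * y3
        + R * (a * y0) + R * (b * y1) + n * S * (a * x0) + n * S * (b * x1) := by ring
  rw [e, hab]
  have : 2 * (R * S) ≤ n * (R * S) := mul_le_mul_of_nonneg_right hn hRS.le
  nlinarith

lemma bd_alg2 (R a b x0 x1 : ℝ) (hR : 0 < R) (hab : a ^ 2 + b ^ 2 = 1)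
    (hx0 : |x0| ≤ 1 / 8 * R) (hx1 : |x1| ≤ 1 / 8 * R) :
    R ^ 2 / 2 ≤ (x0 + R * a) ^ 2 + (x1 + R * b) ^ 2 := by
  have ha : |a| ≤ 1 := abs_le.mpr ⟨by nlinarith [sq_nonneg b], by nlinarith [sq_nonneg b]⟩
  have hb : |b| ≤ 1 := abs_le.mpr ⟨by nlinarith [sq_nonneg a], by nlinarith [sq_nonneg a]⟩
  have key : ∀ x y X Y : ℝ, |x| ≤ X → |y| ≤ Y → -(X * Y) ≤ x * y := by
    intro x y X Y h1 h2
    have h3 : |x * y| ≤ X * Y := by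
      rw [abs_mul]
      exact mul_le_mul h1 h2 (abs_nonneg _) ((abs_nonneg _).trans h1)
    exact (abs_le.mp h3).1
  have k0 := mul_le_mul_of_nonneg_left (key _ _ _ _ ha hx0) hR.le
  have k1 := mul_le_mul_of_nonneg_left (key _ _ _ _ hb hx1) hR.le
  have e : (x0 + R * a) ^ 2 + (x1 + R * b) ^ 2
      = R ^ 2 * (a ^ 2 + b ^ 2) + x0 ^ 2 + x1 ^ 2 + 2 * (R * (a * x0)) + 2 * (R * (b * x1)) := by
    ring
  rw [e, hab]
  nlinarith [sq_nonneg x0, sq_nonneg x1]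

lemma bd_ray (h : ℂ → ℝ) (u : ℂ) (r : ℝ) (hd : DifferentiableAt ℝ h ((r : ℂ) * u)) :
    HasDerivAt (fun s : ℝ => h ((s : ℂ) * u)) (fderiv ℝ h ((r : ℂ) * u) u) r := by
  have h1 : HasDerivAt (fun s : ℝ => (s : ℂ) * u) u r := by
    simpa using (Complex.ofRealCLM.hasDerivAt (x := r)).mul_const u
  exact hd.hasFDerivAt.comp_hasDerivAt r h1

lemma bd_local (f : ℂ → EuclideanSpace ℝ (Fin 4)) (N : ℕ) (hf : IsBranchedDisc f N) :
    ∃ δ : ℝ, 0 < δ ∧ δ < 1 ∧ ∀ u : ℂ, ‖u‖ = 1 → ∀ r : ℝ, 0 < r → r ≤ δ →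
      (r ^ N) ^ 2 / 2 ≤ ‖f ((r : ℂ) * u)‖ ^ 2 ∧
      ∃ d : ℝ, 0 < d ∧ HasDerivAt (fun s : ℝ => ‖f ((s : ℂ) * u)‖ ^ 2) d r := by
  have c8 : (0 : ℝ) < 1 / 8 := by norm_num
  have H := (((hf.comp1.bound c8).and (hf.comp2.bound c8)).and
    ((hf.comp3.bound c8).and (hf.comp4.bound c8))).and
    (((hf.deriv1.bound c8).and (hf.deriv2.bound c8)).and
    ((hf.deriv3.bound c8).and (hf.deriv4.bound c8)))
  obtain ⟨η, hη, hH⟩ := Metric.eventually_nhds_iff.mp H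
  refine ⟨min (η / 2) (1 / 2), by positivity, ?_, ?_⟩
  · exact (min_le_right _ _).trans_lt (by norm_num)
  intro u hu r hr hrδ
  have hr1 : r ≤ η / 2 := hrδ.trans (min_le_left _ _)
  have hr2 : r ≤ 1 / 2 := hrδ.trans (min_le_right _ _)
  have hz : ‖(r : ℂ) * u‖ = r := by simp [hu, abs_of_pos hr]
  have hzη : dist ((r : ℂ) * u) 0 < η := by rw [dist_zero_right, hz]; linarith
  have hmem : (r : ℂ) * u ∈ ball (0 : ℂ) 1 := by
    rw [mem_ball, dist_zero_right, hz]; linarith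
  have hfd : DifferentiableAt ℝ f ((r : ℂ) * u) :=
    (hf.contDiffOn.contDiffAt (isOpen_ball.mem_nhds hmem)).differentiableAt one_ne_zero
  have hfk : ∀ k, DifferentiableAt ℝ (fun w => f w k) ((r : ℂ) * u) := fun k =>
    differentiableAt_euclidean.mp hfd k
  have hpow : DifferentiableAt ℝ (fun w : ℂ => w ^ N) ((r : ℂ) * u) := by fun_prop
  have hre : DifferentiableAt ℝ (fun w : ℂ => (w ^ N).re) ((r : ℂ) * u) :=
    (Complex.reCLM.differentiableAt).comp _ hpow
  have him : DifferentiableAt ℝ (fun w : ℂ => (w ^ N).im) ((r : ℂ) * u) :=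
    (Complex.imCLM.differentiableAt).comp _ hpow
  obtain ⟨⟨⟨b0, b1⟩, ⟨b2, b3⟩⟩, ⟨⟨d0, d1⟩, ⟨d2, d3⟩⟩⟩ := hH hzη
  have D0 := bd_ray (fun w => f w 0 - (w ^ N).re) u r ((hfk 0).sub hre)
  have D1 := bd_ray (fun w => f w 1 - (w ^ N).im) u r ((hfk 1).sub him)
  have D2 := bd_ray _ u r (hfk 2)
  have D3 := bd_ray _ u r (hfk 3)
  have opb : ∀ L : ℂ →L[ℝ] ℝ, ‖L‖ ≤ 1 / 8 * ‖‖(r : ℂ) * u‖ ^ (N - 1)‖ →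
      |L u| ≤ 1 / 8 * r ^ (N - 1) := by
    intro L hL
    rw [hz, Real.norm_of_nonneg (by positivity)] at hL
    have := L.le_opNorm u
    rw [hu, mul_one] at this
    exact this.trans hL
  have E0 := opb _ d0
  have E1 := opb _ d1
  have E2 := opb _ d2
  have E3 := opb _ d3
  rw [hz, Real.norm_of_nonneg (show 0 ≤ r ^ N by positivity), Real.norm_eq_abs] at b0 b1 b2 b3
  have hab : (u ^ N).re ^ 2 + (u ^ N).im ^ 2 = 1 := by
    have : ‖u ^ N‖ ^ 2 = 1 := by simp [hu]
    rw [Complex.sq_norm, Complex.normSq_apply] at this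
    nlinarith
  have pre : ∀ s : ℝ, (((s : ℂ) * u) ^ N).re = s ^ N * (u ^ N).re := by
    intro s; rw [mul_pow, ← Complex.ofReal_pow, Complex.re_ofReal_mul]
  have pim : ∀ s : ℝ, (((s : ℂ) * u) ^ N).im = s ^ N * (u ^ N).im := by
    intro s; rw [mul_pow, ← Complex.ofReal_pow, Complex.im_ofReal_mul]
  have hG : ∀ s : ℝ, ‖f ((s : ℂ) * u)‖ ^ 2 =
      ((f (s * u) 0 - (((s : ℂ) * u) ^ N).re) + s ^ N * (u ^ N).re) ^ 2 +
      ((f (s * u) 1 - (((s : ℂ) * u) ^ N).im) + s ^ N * (u ^ N).im) ^ 2 +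
      f (s * u) 2 ^ 2 + f (s * u) 3 ^ 2 := by
    intro s
    rw [EuclideanSpace.norm_sq_eq, Fin.sum_univ_four, pre, pim]
    simp
  have hR : 0 < r ^ N := by positivity
  have hS : 0 < r ^ (N - 1) := by positivity
  refine ⟨?_, ?_⟩
  · rw [hG r]
    have := bd_alg2 (r ^ N) _ _ _ _ hR hab b0 b1
    nlinarith [sq_nonneg (f (r * u) 2), sq_nonneg (f (r * u) 3)]
  · have hN : (2 : ℝ) ≤ N := by exact_mod_cast hf.two_le
    have pos := bd_alg N (r ^ N) (r ^ (N - 1)) _ _ _ _ _ _ _ _ _ _ hN hR hS hab b0 b1 b2 b3 E0 E1 E2 E3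
    have hp := hasDerivAt_pow N r
    have T := (((D0.add (hp.mul_const (u ^ N).re)).pow 2).add
      ((D1.add (hp.mul_const (u ^ N).im)).pow 2)).add (D2.pow 2) |>.add (D3.pow 2)
    refine ⟨_, ?_, T.congr_of_eventuallyEq (Eventually.of_forall fun s => ?_)⟩
    · simp only [Pi.add_apply, Nat.cast_ofNat, Nat.add_one_sub_one, pow_one]
      linarith
    · simp only [hG s, Pi.add_apply, Pi.pow_apply]

/-- The abstract implicit function argument. -/
lemma bd_implicit (G : ℝ × ℝ → ℝ) (δ c : ℝ) (hδ : 0 < δ)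
    (hcont : ∀ θ, ContinuousOn (fun r => G (θ, r)) (Set.Icc 0 δ))
    (hC : ∀ θ r, 0 < r → r ≤ δ → ContDiffAt ℝ 1 G (θ, r))
    (hD : ∀ θ r, 0 < r → r ≤ δ → ∃ d, 0 < d ∧ HasDerivAt (fun s => G (θ, s)) d r)
    (h0 : ∀ θ, G (θ, 0) < c) (h1 : ∀ θ, c < G (θ, δ)) :
    ∃ ρ : ℝ → ℝ, (∀ θ, ρ θ ∈ Set.Ioo 0 δ) ∧ ContDiff ℝ 1 ρ ∧
      ∀ θ, ∀ r ∈ Set.Ioc 0 δ, (G (θ, r) = c ↔ r = ρ θ) := by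
  have mono : ∀ θ, StrictMonoOn (fun r => G (θ, r)) (Set.Icc 0 δ) := by
    intro θ
    refine strictMonoOn_of_deriv_pos (convex_Icc _ _) (hcont θ) ?_
    intro r hr
    rw [interior_Icc] at hr
    obtain ⟨d, hd, hd'⟩ := hD θ r hr.1 hr.2.le
    rw [hd'.deriv]; exact hd
  have ex : ∀ θ, ∃ r ∈ Set.Ioo 0 δ, G (θ, r) = c := fun θ =>
    intermediate_value_Ioo hδ.le (hcont θ) ⟨h0 θ, h1 θ⟩
  choose ρ hρ hρG using ex
  have uniq : ∀ θ, ∀ r ∈ Set.Ioc 0 δ, (G (θ, r) = c ↔ r = ρ θ) := by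
    intro θ r hr
    constructor
    · intro h
      exact (mono θ).injOn ⟨hr.1.le, hr.2⟩ ⟨(hρ θ).1.le, (hρ θ).2.le⟩ (h.trans (hρG θ).symm)
    · rintro rfl; exact hρG θ
  refine ⟨ρ, hρ, ?_, uniq⟩
  rw [contDiff_iff_contDiffAt]
  intro θ
  have cd := hC θ (ρ θ) (hρ θ).1 (hρ θ).2.le
  obtain ⟨d, hd, hd'⟩ := hD θ (ρ θ) (hρ θ).1 (hρ θ).2.le
  have hcomp : HasDerivAt (fun s => G (θ, s)) (fderiv ℝ G (θ, ρ θ) (0, 1)) (ρ θ) := by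
    have hin : HasDerivAt (fun s : ℝ => (θ, s)) ((0 : ℝ), (1 : ℝ)) (ρ θ) :=
      (hasDerivAt_const _ _).prodMk (hasDerivAt_id _)
    exact (cd.differentiableAt one_ne_zero).hasFDerivAt.comp_hasDerivAt (ρ θ) hin
  have hval : fderiv ℝ G (θ, ρ θ) (0, 1) = d := hcomp.unique hd'
  have hinv : (fderiv ℝ G (θ, ρ θ) ∘L .inr ℝ ℝ ℝ).IsInvertible := by
    refine ⟨ContinuousLinearEquiv.unitsEquivAut ℝ (Units.mk0 d hd.ne'), ?_⟩
    ext
    simp [hval]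
  have hev := cd.eventually_apply_implicitFunction one_ne_zero hinv
  have hsm := cd.contDiffAt_implicitFunction one_ne_zero hinv
  have hself := cd.implicitFunction_apply_self one_ne_zero hinv
  simp only at hev hsm hself
  have hnear : ∀ᶠ x in 𝓝 θ, cd.implicitFunction one_ne_zero hinv x ∈ Set.Ioo 0 δ := by
    apply hsm.continuousAt.eventually_mem
    rw [hself]
    exact Ioo_mem_nhds (hρ θ).1 (hρ θ).2
  refine hsm.congr_of_eventuallyEq ?_
  filter_upwards [hev, hnear] with x hx hx'
  exact ((uniq x _ ⟨hx'.1, hx'.2.le⟩).mp (hx.trans (hρG θ))).symm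

/-- Lemma 1 of the paper (Euclidean model): for a branched disc `f` of order `N` at `0`
there are `δ ∈ (0,1)` and `ε₀ > 0` such that for every `ε ∈ (0, ε₀)` there is a `2π`-periodic
`C¹` function `r_ε : ℝ → (0, δ]` with: for all `θ` and `r ∈ (0, δ]`,
`‖f (r e^{iθ})‖ = ε ↔ r = r_ε θ`; consequently the part of the image of the punctured disc
`{0 < |z| ≤ δ}` lying on the sphere of radius `ε` is exactly the closed curve
`θ ↦ f (r_ε(θ) e^{iθ})`. -/
theorem branchedDisc_sphere_intersection
    (f : ℂ → EuclideanSpace ℝ (Fin 4)) (N : ℕ) (hf : IsBranchedDisc f N) :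
    ∃ δ : ℝ, 0 < δ ∧ δ < 1 ∧ ∃ ε₀ : ℝ, 0 < ε₀ ∧
      ∀ ε : ℝ, 0 < ε → ε < ε₀ →
        ∃ rε : ℝ → ℝ,
          (∀ θ : ℝ, rε θ ∈ Set.Ioc 0 δ) ∧
          Function.Periodic rε (2 * Real.pi) ∧
          ContDiff ℝ 1 rε ∧
          (∀ θ : ℝ, ∀ r : ℝ, r ∈ Set.Ioc 0 δ →
            (‖f ((r : ℂ) * Complex.exp (θ * Complex.I))‖ = ε ↔ r = rε θ)) ∧
          (f '' {z : ℂ | 0 < ‖z‖ ∧ ‖z‖ ≤ δ}) ∩ Metric.sphere (0 : EuclideanSpace ℝ (Fin 4)) ε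
            = Set.range (fun θ : ℝ => f ((rε θ : ℂ) * Complex.exp (θ * Complex.I))) := by
  obtain ⟨δ, hδ, hδ1, hloc⟩ := bd_local f N hf
  have hN : 2 ≤ N := hf.two_le
  refine ⟨δ, hδ, hδ1, δ ^ N / 2, by positivity, ?_⟩
  intro ε hε hεlt
  have hu : ∀ θ : ℝ, ‖Complex.exp (θ * Complex.I)‖ = 1 := Complex.norm_exp_ofReal_mul_I
  have hmem : ∀ (θ r : ℝ), 0 ≤ r → r ≤ δ →
      (r : ℂ) * Complex.exp (θ * Complex.I) ∈ ball (0 : ℂ) 1 := by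
    intro θ r h0 h1
    rw [mem_ball, dist_zero_right, norm_mul, hu, mul_one, Complex.norm_real,
      Real.norm_of_nonneg h0]
    linarith
  have hC : ∀ θ r, 0 ≤ r → r ≤ δ → ContDiffAt ℝ 1
      (fun p : ℝ × ℝ => ‖f ((p.2 : ℂ) * Complex.exp (p.1 * Complex.I))‖ ^ 2) (θ, r) := by
    intro θ r h0 h1
    have hin : ContDiffAt ℝ 1
        (fun p : ℝ × ℝ => (p.2 : ℂ) * Complex.exp (p.1 * Complex.I)) (θ, r) := by
      have a1 : ContDiff ℝ 1 (fun p : ℝ × ℝ => (p.2 : ℂ)) :=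
        Complex.ofRealCLM.contDiff.comp contDiff_snd
      have a2 : ContDiff ℝ 1 (fun p : ℝ × ℝ => (p.1 : ℂ)) :=
        Complex.ofRealCLM.contDiff.comp contDiff_fst
      exact (a1.mul (a2.mul contDiff_const).cexp).contDiffAt
    have hfc : ContDiffAt ℝ 1 f ((r : ℂ) * Complex.exp (θ * Complex.I)) :=
      hf.contDiffOn.contDiffAt (isOpen_ball.mem_nhds (hmem θ r h0 h1))
    exact (ContDiffAt.comp (θ, r) hfc hin).norm_sq ℝ
  obtain ⟨ρ, hρ, hρC, huniq⟩ := bd_implicit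
    (fun p : ℝ × ℝ => ‖f ((p.2 : ℂ) * Complex.exp (p.1 * Complex.I))‖ ^ 2) δ (ε ^ 2) hδ
    (by
      intro θ r hr
      have h1 := (hC θ r hr.1 hr.2).continuousAt
      have h2 : ContinuousAt (fun s : ℝ => (θ, s)) r := by fun_prop
      exact (ContinuousAt.comp (f := fun s : ℝ => (θ, s)) h1 h2).continuousWithinAt)
    (fun θ r h0 h1 => hC θ r h0.le h1)
    (fun θ r h0 h1 => (hloc _ (hu θ) r h0 h1).2)
    (by intro θ; simp only [Complex.ofReal_zero, zero_mul, hf.map_zero, norm_zero]; nlinarith)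
    (by
      intro θ
      have := (hloc _ (hu θ) δ hδ le_rfl).1
      have hp : 0 < δ ^ N := by positivity
      refine lt_of_lt_of_le ?_ this
      nlinarith)
  have hiff : ∀ θ : ℝ, ∀ r : ℝ, r ∈ Set.Ioc 0 δ →
      (‖f ((r : ℂ) * Complex.exp (θ * Complex.I))‖ = ε ↔ r = ρ θ) := by
    intro θ r hr
    rw [← huniq θ r hr]
    exact (sq_eq_sq₀ (norm_nonneg _) hε.le).symm
  have hIoc : ∀ θ, ρ θ ∈ Set.Ioc 0 δ := fun θ => ⟨(hρ θ).1, (hρ θ).2.le⟩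
  refine ⟨ρ, hIoc, ?_, hρC, hiff, ?_⟩
  · intro θ
    rw [← hiff θ _ (hIoc _)]
    have h := (hiff (θ + 2 * Real.pi) _ (hIoc _)).mpr rfl
    have e : Complex.exp (((θ + 2 * Real.pi : ℝ) : ℂ) * Complex.I)
        = Complex.exp (θ * Complex.I) := by
      push_cast
      rw [add_mul, Complex.exp_periodic]
    rwa [e] at h
  · ext y
    constructor
    · rintro ⟨⟨z, ⟨hz0, hz1⟩, rfl⟩, hy⟩
      refine ⟨z.arg, ?_⟩
      have hzz : ((‖z‖ : ℝ) : ℂ) * Complex.exp (z.arg * Complex.I) = z :=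
        Complex.norm_mul_exp_arg_mul_I z
      have := (hiff z.arg ‖z‖ ⟨hz0, hz1⟩).mp (by rw [hzz]; simpa using hy)
      simp only [← this, hzz]
    · rintro ⟨θ, rfl⟩
      have hn : ‖(ρ θ : ℂ) * Complex.exp (θ * Complex.I)‖ = ρ θ := by
        rw [norm_mul, hu, mul_one, Complex.norm_real, Real.norm_of_nonneg (hρ θ).1.le]
      refine ⟨⟨_, ⟨?_, ?_⟩, rfl⟩, ?_⟩
      · rw [hn]; exact (hρ θ).1
      · rw [hn]; exact (hρ θ).2.le
      · simpa using (hiff θ _ (hIoc θ)).mpr rfl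
end

section
/- Let ε₀ > 0, let a : ℕ → (0,ε₀) → ℝ and b : (0,ε₀) → ℝ, and let μ ∈ ℝ. Assume: (i) for all ε, ε′ with 0 < ε′ < ε < ε₀, lim_{n→∞} (aₙ(ε) − aₙ(ε′)) = b(ε) − b(ε′); and (ii) b(ε) → 0 as ε → 0⁺. Then the following two assertions are equivalent: (1) there exists a sequence (ε_s) in (0,ε₀) with ε_s → 0 such that for every s the limit μ⁽ˢ⁾ := lim_{n→∞} aₙ(ε_s) exists and is finite, and lim_{s→∞} μ⁽ˢ⁾ = μ; (2) for every ε ∈ (0, ε₀), lim_{n→∞} aₙ(ε) = b(ε) + μ. -/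
open Filter Topology

/-- Abstract content of Lemma 3 of the paper. Let `a n ε` (for `ε ∈ (0, ε₀)`) and `b ε`
be real numbers such that (i) for `0 < ε' < ε < ε₀`, `aₙ(ε) − aₙ(ε′) → b(ε) − b(ε′)` as
`n → ∞`, and (ii) `b(ε) → 0` as `ε → 0⁺`. Then the following are equivalent:
(1) there is a sequence `ε_s → 0` in `(0, ε₀)` such that each limit
`μ⁽ˢ⁾ = lim_n aₙ(ε_s)` exists and `μ⁽ˢ⁾ → μ`;
(2) for every `ε ∈ (0, ε₀)`, `lim_n aₙ(ε) = b(ε) + μ`. -/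
theorem double_limit_criterion
    (ε₀ : ℝ) (hε₀ : 0 < ε₀) (a : ℕ → ℝ → ℝ) (b : ℝ → ℝ) (μ : ℝ)
    (hi : ∀ ε ε' : ℝ, 0 < ε' → ε' < ε → ε < ε₀ →
      Tendsto (fun n => a n ε - a n ε') atTop (𝓝 (b ε - b ε')))
    (hb : Tendsto b (𝓝[>] (0 : ℝ)) (𝓝 0)) :
    (∃ εs : ℕ → ℝ, (∀ s, εs s ∈ Set.Ioo 0 ε₀) ∧ Tendsto εs atTop (𝓝 0) ∧
        ∃ μs : ℕ → ℝ, (∀ s, Tendsto (fun n => a n (εs s)) atTop (𝓝 (μs s))) ∧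
          Tendsto μs atTop (𝓝 μ))
      ↔ (∀ ε ∈ Set.Ioo 0 ε₀, Tendsto (fun n => a n ε) atTop (𝓝 (b ε + μ))) := by
  constructor
  · rintro ⟨εs, hmem, hεs, μs, hμs, hμ⟩ ε ⟨h0, h1⟩
    have hbs : Tendsto (fun s => b (εs s)) atTop (𝓝 0) :=
      hb.comp (tendsto_nhdsWithin_iff.2 ⟨hεs, Eventually.of_forall fun s => (hmem s).1⟩)
    have key : ∀ᶠ s in atTop,
        Tendsto (fun n => a n ε) atTop (𝓝 (b ε - b (εs s) + μs s)) := by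
      filter_upwards [hεs.eventually_lt_const h0] with s hs
      have h := (hi ε (εs s) (hmem s).1 hs h1).add (hμs s)
      simpa using h
    obtain ⟨s₀, hs₀⟩ := key.exists
    have hL : Tendsto (fun s => b ε - b (εs s) + μs s) atTop (𝓝 (b ε + μ)) := by
      simpa using (hbs.const_sub (b ε)).add hμ
    have hc : Tendsto (fun s => b ε - b (εs s) + μs s) atTop
        (𝓝 (b ε - b (εs s₀) + μs s₀)) := by
      refine tendsto_const_nhds.congr' ?_
      filter_upwards [key] with s hs
      exact tendsto_nhds_unique hs₀ hs
    rw [tendsto_nhds_unique hL hc]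
    exact hs₀
  · intro h
    have hmem : ∀ s : ℕ, ε₀ / 2 * (1 / ((s : ℝ) + 1)) ∈ Set.Ioo 0 ε₀ := by
      intro s
      refine ⟨by positivity, ?_⟩
      have h1 : 1 / ((s : ℝ) + 1) ≤ 1 := by
        rw [div_le_one (by positivity)]
        linarith [(Nat.cast_nonneg s : (0 : ℝ) ≤ s)]
      nlinarith
    have hlim : Tendsto (fun s : ℕ => ε₀ / 2 * (1 / ((s : ℝ) + 1))) atTop (𝓝 0) := by
      simpa using (tendsto_one_div_add_atTop_nhds_zero_nat (𝕜 := ℝ)).const_mul (ε₀ / 2)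
    have hbs := hb.comp
      (tendsto_nhdsWithin_iff.2 ⟨hlim, Eventually.of_forall fun s => (hmem s).1⟩)
    refine ⟨_, hmem, hlim, _, fun s => h _ (hmem s), ?_⟩
    simpa using hbs.add_const μ
end
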